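/- For all 1 ≤ j,k ≤ q, the fourth Wirtinger derivative of ψ in the z-variables satisfies ∂^4ψ/∂z̄_j∂z_j∂z̄_k∂z_k(0,0) = Σ_{t=q+1}^n [2i/(|λ_t|+|λ_j|+|λ_k|)^2 · (|λ_t|+|λ_j|+|λ_k| − |λ_j||λ_k|/(|λ_k|+|λ_t|) − |λ_j||λ_k|/(|λ_j|+|λ_t|))] |∂^3φ/∂z̄_t∂z_j∂z_k(0)|^2 − i ∂^4φ/∂z̄_j∂z_j∂z̄_k∂z_k(0), where all derivatives of ψ are taken in the z-variables (w held fixed) and evaluated at (z,w) = (0,0). -/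

import Mathlib

open Complex Asymptotics

attribute [local instance] Classical.propDecidable

noncomputable section

/-- `ℂⁿ` as `Fin n → ℂ`. -/
abbrev Cn (n : ℕ) := Fin n → ℂ

/-- Wirtinger derivative `∂/∂z_j = (1/2)(∂/∂x_{2j-1} − i ∂/∂x_{2j})`. -/
def wd {n : ℕ} (j : Fin n) (f : Cn n → ℂ) : Cn n → ℂ := fun z =>
  (1 / 2 : ℂ) *
    (fderiv ℝ f z (Pi.single j 1) - Complex.I * fderiv ℝ f z (Pi.single j Complex.I))

/-- Wirtinger derivative `∂/∂z̄_j = (1/2)(∂/∂x_{2j-1} + i ∂/∂x_{2j})`. -/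
def wdb {n : ℕ} (j : Fin n) (f : Cn n → ℂ) : Cn n → ℂ := fun z =>
  (1 / 2 : ℂ) *
    (fderiv ℝ f z (Pi.single j 1) + Complex.I * fderiv ℝ f z (Pi.single j Complex.I))

/-- A real-valued function regarded as complex-valued. -/
def cplx {n : ℕ} (φ : Cn n → ℝ) : Cn n → ℂ := fun z => (φ z : ℂ)

/-- `φ` is smooth and `φ(z) = Σ_j λ_j |z_j|² + O(|z|³)` as `z → 0`. -/
def PhiOK {n : ℕ} (lam : Fin n → ℝ) (φ : Cn n → ℝ) : Prop :=
  ContDiff ℝ (⊤ : ℕ∞) φ ∧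
    (fun z : Cn n => φ z - ∑ j, lam j * Complex.normSq (z j)) =O[nhds 0] fun z => ‖z‖ ^ 3

/-- The conditions (a)–(e) on the phase function `ψ`. -/
def Admissible {n : ℕ} (lam : Fin n → ℝ) (φ : Cn n → ℝ) (ψ : Cn n → Cn n → ℂ) : Prop :=
  ContDiff ℝ (⊤ : ℕ∞) (fun p : Cn n × Cn n => ψ p.1 p.2) ∧
  -- (a)
  (∀ z, ψ z z = 0) ∧
  (∀ z w, ψ z w = - (starRingEnd ℂ) (ψ w z)) ∧
  -- (b)
  (∃ c : ℝ, 0 < c ∧ ∀ z w, c * ‖z - w‖ ^ 2 ≤ (ψ z w).im) ∧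
  -- (c): on the diagonal, ∂ψ/∂z̄_j = i ∂φ/∂z̄_j, ∂ψ/∂z_j = −i ∂φ/∂z_j,
  --      ∂ψ/∂w̄_j = −i ∂φ/∂z̄_j, ∂ψ/∂w_j = i ∂φ/∂z_j
  (∀ (z : Cn n) (j : Fin n), wdb j (fun x => ψ x z) z = Complex.I * wdb j (cplx φ) z) ∧
  (∀ (z : Cn n) (j : Fin n), wd j (fun x => ψ x z) z = - Complex.I * wd j (cplx φ) z) ∧
  (∀ (z : Cn n) (j : Fin n), wdb j (fun w => ψ z w) z = - Complex.I * wdb j (cplx φ) z) ∧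
  (∀ (z : Cn n) (j : Fin n), wd j (fun w => ψ z w) z = Complex.I * wd j (cplx φ) z) ∧
  -- (d): Σ_j (i ∂ψ/∂z̄_j + ∂φ/∂z̄_j)(−i ∂ψ/∂z_j + ∂φ/∂z_j) vanishes to infinite
  --      order on the diagonal
  (∀ (m : ℕ) (z : Cn n),
    iteratedFDeriv ℝ m
      (fun p : Cn n × Cn n =>
        ∑ j, (Complex.I * wdb j (fun x => ψ x p.2) p.1 + wdb j (cplx φ) p.1) *
             (- Complex.I * wd j (fun x => ψ x p.2) p.1 + wd j (cplx φ) p.1))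
      (z, z) = 0) ∧
  -- (e)
  ((fun p : Cn n × Cn n =>
      ψ p.1 p.2 -
        (Complex.I * ∑ j, ((|lam j| * Complex.normSq (p.1 j - p.2 j) : ℝ) : ℂ)
          + Complex.I * ∑ j, ((lam j : ℝ) : ℂ) *
              ((starRingEnd ℂ) (p.1 j) * p.2 j - (starRingEnd ℂ) (p.2 j) * p.1 j)))
    =O[nhds 0] fun p => ‖p‖ ^ 3)

/-!
Put `A_t = i ∂ψ/∂z̄_t + ∂φ/∂z̄_t` and `B_t = -i ∂ψ/∂z_t + ∂φ/∂z_t`. Since all `A_t` and `B_t`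
vanish on the diagonal, only those terms in the Leibniz expansion of a derivative of `∑ A_t B_t`
at the origin survive in which both factors are differentiated. The quadratic parts of `φ` and
of the slice `ψ(·, 0)` are diagonal, so the terms in which one factor is differentiated exactly
once, along `x`, add up to a scalar weight times the full derivative of `iψ`, minus another one
times that of `φ`. At order three there are no other terms, and this determines every third
derivative of `ψ` along directions whose weights do not add up to zero. At order four the
products of second derivatives of `A_t` and `B_t` are left over; along `∂̄_j, ∂_j, ∂̄_k, ∂_k`
with `λ_j, λ_k < 0` they all vanish except `∂_j ∂_k A_t · ∂̄_j ∂̄_k B_t` with `λ_t > 0`. In its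
second factor the weights of `∂̄_j, ∂̄_k, ∂_t` do add up to zero; Hermitian symmetry turns this
derivative of `ψ` into one in the `w` variables, which is computed from directions tangent to
the diagonal, whose weights are zero.
-/

section Leibniz

variable {k R S : Type*} [CommSemiring k] [CommSemiring R] [Algebra k R] [CommSemiring S]
  [Algebra k S] (ev : R →ₐ[k] S) {a b : R}

theorem map_derivation_mul₃_of_map_eq_zero (ha : ev a = 0) (hb : ev b = 0)
    (D₁ D₂ D₃ : Derivation k R R) :
    ev (D₁ (D₂ (D₃ (a * b)))) =
      (ev (D₁ a) * ev (D₂ (D₃ b)) + ev (D₂ (D₃ a)) * ev (D₁ b)) +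
      (ev (D₂ a) * ev (D₁ (D₃ b)) + ev (D₁ (D₃ a)) * ev (D₂ b)) +
      (ev (D₃ a) * ev (D₁ (D₂ b)) + ev (D₁ (D₂ a)) * ev (D₃ b)) := by
  simp only [Derivation.leibniz, map_add, map_mul, smul_eq_mul, ha, hb]
  ring

theorem map_derivation_mul₄_of_map_eq_zero (ha : ev a = 0) (hb : ev b = 0)
    (D₁ D₂ D₃ D₄ : Derivation k R R) :
    ev (D₁ (D₂ (D₃ (D₄ (a * b))))) =
      (ev (D₁ a) * ev (D₂ (D₃ (D₄ b))) + ev (D₂ (D₃ (D₄ a))) * ev (D₁ b)) +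
      (ev (D₂ a) * ev (D₁ (D₃ (D₄ b))) + ev (D₁ (D₃ (D₄ a))) * ev (D₂ b)) +
      (ev (D₃ a) * ev (D₁ (D₂ (D₄ b))) + ev (D₁ (D₂ (D₄ a))) * ev (D₃ b)) +
      (ev (D₄ a) * ev (D₁ (D₂ (D₃ b))) + ev (D₁ (D₂ (D₃ a))) * ev (D₄ b)) +
      (ev (D₁ (D₂ a)) * ev (D₃ (D₄ b)) + ev (D₃ (D₄ a)) * ev (D₁ (D₂ b)) +
        (ev (D₁ (D₃ a)) * ev (D₂ (D₄ b)) + ev (D₂ (D₄ a)) * ev (D₁ (D₃ b))) +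
        (ev (D₁ (D₄ a)) * ev (D₂ (D₃ b)) + ev (D₂ (D₃ a)) * ev (D₁ (D₄ b)))) := by
  simp only [Derivation.leibniz, map_add, map_mul, smul_eq_mul, ha, hb]
  ring

end Leibniz

theorem isLittleO_norm_pow_of_isBigO {E F : Type*} [NormedAddCommGroup E] [NormedAddCommGroup F]
    {f : E → F} {m : ℕ} (hf : f =O[nhds 0] fun x => ‖x‖ ^ (m + 1)) :
    f =o[nhds 0] fun x => ‖x‖ ^ m :=
  hf.trans_isLittleO
    ((isLittleO_pow_pow (𝕜 := ℝ) m.lt_succ_self).comp_tendsto tendsto_norm_zero)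

theorem iteratedDeriv_eq_zero_of_isLittleO {F : Type*} [NormedAddCommGroup F] [NormedSpace ℝ F]
    {f : ℝ → F} {x₀ : ℝ} {m : ℕ} (hf : ContDiff ℝ m f)
    (hO : f =o[nhds x₀] fun x => (x - x₀) ^ m) : iteratedDeriv m f x₀ = 0 := by
  induction m using Nat.strong_induction_on with
  | _ m ih =>
    have lower_eq_zero : ∀ i < m, iteratedDeriv i f x₀ = 0 := fun i hi => by
      refine ih i hi (hf.of_le (by exact_mod_cast hi.le)) (hO.trans_isBigO ?_)
      have htendsto : Filter.Tendsto (fun x : ℝ => x - x₀) (nhds x₀) (nhds 0) :=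
        Continuous.tendsto' (by fun_prop) _ _ (sub_self x₀)
      exact ((isLittleO_pow_pow hi).comp_tendsto htendsto).isBigO
    have taylor : ∀ x, taylorWithinEval f m Set.univ x₀ x =
        (x - x₀) ^ m • ((m.factorial : ℝ)⁻¹ • iteratedDeriv m f x₀) := fun x => by
      rw [taylor_within_apply, Finset.sum_range_succ, Finset.sum_eq_zero fun i hi => ?_, zero_add,
        iteratedDerivWithin_univ, mul_comm, mul_smul]
      rw [iteratedDerivWithin_univ, lower_eq_zero i (Finset.mem_range.1 hi), smul_zero]
    have leading : (fun x => (x - x₀) ^ m • ((m.factorial : ℝ)⁻¹ • iteratedDeriv m f x₀))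
        =o[nhds x₀] fun x => (x - x₀) ^ m :=
      (hO.sub (taylor_isLittleO_univ hf)).congr_left fun x => by rw [sub_sub_cancel, taylor]
    have coeff_isLittleO : (fun _ : ℝ => (m.factorial : ℝ)⁻¹ • iteratedDeriv m f x₀)
        =o[nhdsWithin x₀ {x₀}ᶜ] fun _ => (1 : ℝ) := by
      refine ((isBigO_refl (fun x : ℝ => ((x - x₀) ^ m)⁻¹) _).smul_isLittleO
        (leading.mono nhdsWithin_le_nhds)).congr' ?_ ?_ <;>
      · filter_upwards [self_mem_nhdsWithin] with x hx
        have hpow : (x - x₀) ^ m ≠ 0 := pow_ne_zero m (sub_ne_zero.2 hx)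
        simp [smul_smul, hpow]
    simpa [Nat.factorial_ne_zero] using isLittleO_const_const_iff.1 coeff_isLittleO

/-- The `*`-algebra of smooth complex-valued functions on a real normed space. -/
def SmoothFunction (E : Type*) [NormedAddCommGroup E] [NormedSpace ℝ E] :
    StarSubalgebra ℂ (E → ℂ) where
  carrier := {f | ContDiff ℝ (⊤ : ℕ∞) f}
  mul_mem' {f g} (hf : ContDiff ℝ _ f) (hg : ContDiff ℝ _ g) :=
    show ContDiff ℝ (⊤ : ℕ∞) fun p => f p * g p from hf.mul hg
  add_mem' {f g} (hf : ContDiff ℝ _ f) (hg : ContDiff ℝ _ g) :=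
    show ContDiff ℝ (⊤ : ℕ∞) fun p => f p + g p from hf.add hg
  algebraMap_mem' c := show ContDiff ℝ (⊤ : ℕ∞) fun _ : E => c from contDiff_const
  star_mem' {f} (hf : ContDiff ℝ _ f) :=
    show ContDiff ℝ (⊤ : ℕ∞) fun p => Complex.conjCLE (f p) from Complex.conjCLE.contDiff.comp hf

namespace SmoothFunction

variable {E F : Type*} [NormedAddCommGroup E] [NormedSpace ℝ E] [NormedAddCommGroup F]
  [NormedSpace ℝ F]

instance : CoeFun (SmoothFunction E) fun _ => E → ℂ := ⟨Subtype.val⟩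

theorem contDiff (f : SmoothFunction E) {m : ℕ∞} : ContDiff ℝ m f :=
  ContDiff.of_le (show ContDiff ℝ (⊤ : ℕ∞) f from f.2) (by exact_mod_cast le_top)

theorem differentiable (f : SmoothFunction E) : Differentiable ℝ f :=
  (contDiff f (m := 1)).differentiable one_ne_zero

theorem contDiff_fderiv (f : SmoothFunction E) : ContDiff ℝ (⊤ : ℕ∞) (fderiv ℝ f) :=
  (contDiff f (m := ⊤)).fderiv_right (by simp)

/-- Evaluation of smooth functions at a point, as an algebra homomorphism. -/
def evalAt (p : E) : SmoothFunction E →ₐ[ℂ] ℂ :=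
  (Pi.evalAlgHom ℂ (fun _ : E => ℂ) p).comp (SmoothFunction E).subtype.toAlgHom

theorem evalAt_apply (p : E) (f : SmoothFunction E) : evalAt p f = f p := rfl

theorem evalAt_star (p : E) (f : SmoothFunction E) :
    evalAt p (star f) = starRingEnd ℂ (evalAt p f) := rfl

/-- The directional derivative along a real vector, as a derivation. -/
def dirDeriv (v : E) : Derivation ℂ (SmoothFunction E) (SmoothFunction E) :=
  Derivation.mk'
    { toFun := fun f => ⟨fun p => fderiv ℝ f p v,
        (contDiff_fderiv f).clm_apply contDiff_const⟩
      map_add' := fun f g => by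
        ext p
        exact DFunLike.congr_fun (fderiv_add (differentiable f p) (differentiable g p)) v
      map_smul' := fun c f => by
        ext p
        exact DFunLike.congr_fun (fderiv_const_smul (differentiable f p) c) v }
    fun f g => by
      ext p
      exact DFunLike.congr_fun (fderiv_mul (differentiable f p) (differentiable g p)) v

theorem dirDeriv_apply (v : E) (f : SmoothFunction E) (p : E) :
    dirDeriv v f p = fderiv ℝ f p v := rfl

theorem dirDeriv_add (u v : E) : dirDeriv (u + v) = dirDeriv u + dirDeriv v := by
  ext f p
  exact map_add (fderiv ℝ f p) u v

theorem dirDeriv_comm (u v : E) (f : SmoothFunction E) :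
    dirDeriv u (dirDeriv v f) = dirDeriv v (dirDeriv u f) := by
  have second (a b p : E) : dirDeriv a (dirDeriv b f) p = fderiv ℝ (fderiv ℝ f) p a b := by
    have hd : DifferentiableAt ℝ (fderiv ℝ f) p :=
      (contDiff_fderiv f).differentiable (by simp) p
    change fderiv ℝ (fun p => fderiv ℝ f p b) p a = _
    rw [fderiv_clm_apply hd (differentiableAt_const _)]
    simp
  ext p
  rw [second, second]
  exact (contDiff f (m := 2)).contDiffAt.isSymmSndFDerivAt (by simp) u v

/-- The derivative along a complexified tangent vector: the pair `x` stands for `x.1 + i x.2`. -/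
def cderiv (x : E × E) : Derivation ℂ (SmoothFunction E) (SmoothFunction E) :=
  dirDeriv x.1 + Complex.I • dirDeriv x.2

theorem cderiv_def (x : E × E) (f : SmoothFunction E) :
    cderiv x f = dirDeriv x.1 f + Complex.I • dirDeriv x.2 f := rfl

theorem cderiv_apply (x : E × E) (f : SmoothFunction E) (p : E) :
    cderiv x f p = fderiv ℝ f p x.1 + Complex.I * fderiv ℝ f p x.2 := rfl

theorem cderiv_add (x y : E × E) : cderiv (x + y) = cderiv x + cderiv y := by
  simp only [cderiv, Prod.fst_add, Prod.snd_add, dirDeriv_add, smul_add]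
  abel

theorem cderiv_comm (x y : E × E) (f : SmoothFunction E) :
    cderiv x (cderiv y f) = cderiv y (cderiv x f) := by
  simp only [cderiv_def, map_add, Derivation.map_smul]
  rw [dirDeriv_comm x.1 y.1, dirDeriv_comm x.1 y.2, dirDeriv_comm x.2 y.1, dirDeriv_comm x.2 y.2]
  module

theorem cderiv_star (x : E × E) (f : SmoothFunction E) :
    cderiv x (star f) = star (cderiv (x.1, -x.2) f) := by
  have hstar (v p : E) : fderiv ℝ (star f : SmoothFunction E) p v = star (fderiv ℝ f p v) :=
    DFunLike.congr_fun (differentiable f p).hasFDerivAt.star.fderiv v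
  ext p
  change cderiv x (star f) p = star (cderiv (x.1, -x.2) f p)
  simp only [cderiv_apply, hstar, map_neg, star_add, star_mul', mul_neg, star_neg, Complex.star_def,
    Complex.conj_I, neg_mul, neg_neg]

/-- Composition of smooth functions with a continuous affine map. -/
def pullback (L : E →ᴬ[ℝ] F) : SmoothFunction F →ₐ[ℂ] SmoothFunction E where
  toFun f := ⟨fun p => f (L p), show ContDiff ℝ (⊤ : ℕ∞) (f ∘ L) from
    (contDiff f).comp L.contDiff⟩
  map_one' := rfl
  map_mul' _ _ := rfl
  map_zero' := rfl
  map_add' _ _ := rfl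
  commutes' _ := rfl

theorem cderiv_pullback (L : E →ᴬ[ℝ] F) (x : E × E) (f : SmoothFunction F) :
    cderiv x (pullback L f) = pullback L (cderiv (x.map L.contLinear L.contLinear) f) := by
  have chain (v p : E) : fderiv ℝ (pullback L f) p v = fderiv ℝ f (L p) (L.contLinear v) :=
    DFunLike.congr_fun ((differentiable f (L p)).hasFDerivAt.comp p L.hasFDerivAt).fderiv v
  ext p
  change cderiv x (pullback L f) p = cderiv (x.map L.contLinear L.contLinear) f (L p)
  simp only [cderiv_apply, chain, Prod.map_fst, Prod.map_snd]

/-- All derivatives of `f` of order less than `k` vanish at `p`. -/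
def VanishesToOrder (k : ℕ) (p : E) (f : SmoothFunction E) : Prop :=
  ∀ m < k, iteratedFDeriv ℝ m f p = 0

theorem VanishesToOrder.evalAt_eq_zero {k : ℕ} {p : E} {f : SmoothFunction E}
    (hf : VanishesToOrder (k + 1) p f) : evalAt p f = 0 := by
  simpa [evalAt_apply] using congrArg (· fun _ => 0) (hf 0 k.succ_pos)

theorem VanishesToOrder.dirDeriv {k : ℕ} {p : E} {f : SmoothFunction E}
    (hf : VanishesToOrder (k + 1) p f) (v : E) : VanishesToOrder k p (dirDeriv v f) := by
  intro m hm
  have hfderiv : iteratedFDeriv ℝ m (fderiv ℝ f) p = 0 := by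
    rw [← norm_eq_zero, norm_iteratedFDeriv_fderiv, hf (m + 1) (by lia), norm_zero]
  change iteratedFDeriv ℝ m (ContinuousLinearMap.apply ℝ ℂ v ∘ fderiv ℝ f) p = 0
  rw [ContinuousLinearMap.iteratedFDeriv_comp_left _ (n := (⊤ : ℕ∞))
    (contDiff_fderiv f).contDiffAt (by exact_mod_cast le_top), hfderiv]
  ext
  simp

theorem VanishesToOrder.cderiv {k : ℕ} {p : E} {f : SmoothFunction E}
    (hf : VanishesToOrder (k + 1) p f) (x : E × E) : VanishesToOrder k p (cderiv x f) := by
  intro m hm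
  have hre := contDiff (SmoothFunction.dirDeriv x.1 f) (m := m)
  have him := contDiff (SmoothFunction.dirDeriv x.2 f) (m := m)
  have him_smul : ContDiff ℝ m (Complex.I • ⇑(SmoothFunction.dirDeriv x.2 f)) :=
    him.const_smul Complex.I
  change iteratedFDeriv ℝ m
    (⇑(SmoothFunction.dirDeriv x.1 f) + Complex.I • ⇑(SmoothFunction.dirDeriv x.2 f)) p = 0
  rw [iteratedFDeriv_add_apply hre.contDiffAt him_smul.contDiffAt,
    iteratedFDeriv_const_smul_apply him.contDiffAt, hf.dirDeriv x.1 m hm, hf.dirDeriv x.2 m hm,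
    smul_zero, add_zero]

theorem iteratedDeriv_comp_line (f : SmoothFunction E) (p v : E) (m : ℕ) :
    iteratedDeriv m (fun t : ℝ => f (p + t • v)) =
      fun t => ((dirDeriv v)^[m] f : SmoothFunction E) (p + t • v) := by
  induction m with
  | zero => rfl
  | succ m ih =>
    funext t
    have hline : HasDerivAt (fun t : ℝ => p + t • v) v t := by
      simpa using ((hasDerivAt_id t).smul_const v).const_add p
    rw [iteratedDeriv_succ, ih, Function.iterate_succ_apply', dirDeriv_apply]
    exact ((differentiable _ _).hasFDerivAt.comp_hasDerivAt t hline).deriv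

theorem evalAt_iterate_dirDeriv_eq_zero_of_isLittleO {f : SmoothFunction E} {p : E} {m : ℕ}
    (hf : f =o[nhds p] fun q => ‖q - p‖ ^ m) (v : E) :
    evalAt p ((dirDeriv v)^[m] f) = 0 := by
  have hline : ContDiff ℝ m fun t : ℝ => p + t • v := by fun_prop
  have htendsto : Filter.Tendsto (fun t : ℝ => p + t • v) (nhds 0) (nhds p) :=
    Continuous.tendsto' (by fun_prop) _ _ (by simp)
  have hO : (fun t : ℝ => f (p + t • v)) =o[nhds 0] fun t => (t - 0) ^ m := by
    refine (hf.comp_tendsto htendsto).trans_isBigO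
      (IsBigO.of_bound (‖v‖ ^ m) (Filter.Eventually.of_forall fun t => le_of_eq ?_))
    simp [norm_smul, mul_pow, mul_comm]
  have hzero := iteratedDeriv_eq_zero_of_isLittleO ((contDiff f (m := m)).comp hline) hO
  change iteratedDeriv m (fun t : ℝ => f (p + t • v)) 0 = 0 at hzero
  simpa [iteratedDeriv_comp_line, evalAt_apply] using hzero

theorem evalAt_cderiv_cderiv_eq_zero_of_isLittleO {f : SmoothFunction E} {p : E}
    (hf : f =o[nhds p] fun q => ‖q - p‖ ^ 2) (x y : E × E) :
    evalAt p (cderiv x (cderiv y f)) = 0 := by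
  have diagonal (v : E) : evalAt p (dirDeriv v (dirDeriv v f)) = 0 :=
    evalAt_iterate_dirDeriv_eq_zero_of_isLittleO hf v
  have polarized (u v : E) : evalAt p (dirDeriv u (dirDeriv v f)) = 0 := by
    have hadd := diagonal (u + v)
    simp only [dirDeriv_add, Derivation.add_apply, map_add, diagonal, dirDeriv_comm v u] at hadd
    linear_combination hadd / 2
  simp only [cderiv_def, map_add, map_smul, Derivation.map_smul, polarized, smul_zero, add_zero]

/-- A continuous real-linear functional, as a smooth function. -/
def ofCLM (L : E →L[ℝ] ℂ) : SmoothFunction E := ⟨L, show ContDiff ℝ (⊤ : ℕ∞) L from L.contDiff⟩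

theorem cderiv_ofCLM (x : E × E) (L : E →L[ℝ] ℂ) :
    cderiv x (ofCLM L) = algebraMap ℂ _ (L x.1 + Complex.I * L x.2) := by
  have hfderiv (p : E) : fderiv ℝ (ofCLM L) p = L := L.fderiv
  ext p
  change cderiv x (ofCLM L) p = L x.1 + Complex.I * L x.2
  rw [cderiv_apply, hfderiv]

end SmoothFunction

section Wirtinger

open SmoothFunction

section ComplexTangent

variable {E F : Type*} [NormedAddCommGroup E] [NormedSpace ℝ E] [Module ℂ E]
  [NormedAddCommGroup F] [NormedSpace ℝ F] [Module ℂ F]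

/-- The tangent vector `∂_v = (v - i Jv) / 2` of type `(1, 0)`, where `Jv = I • v`. -/
def holVec (v : E) : E × E := ((1 / 2 : ℝ) • v, -((1 / 2 : ℝ) • Complex.I • v))

/-- The tangent vector `∂̄_v = (v + i Jv) / 2` of type `(0, 1)`, where `Jv = I • v`. -/
def antiholVec (v : E) : E × E := ((1 / 2 : ℝ) • v, (1 / 2 : ℝ) • Complex.I • v)

theorem cderiv_holVec_star (v : E) (f : SmoothFunction E) :
    cderiv (holVec v) (star f) = star (cderiv (antiholVec v) f) := by
  simp only [cderiv_star, holVec, antiholVec, neg_neg]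

theorem cderiv_antiholVec_star (v : E) (f : SmoothFunction E) :
    cderiv (antiholVec v) (star f) = star (cderiv (holVec v) f) :=
  cderiv_star _ f

theorem cderiv_holVec_pullback {L : E →ᴬ[ℝ] F} {v : E}
    (hL : L.contLinear (Complex.I • v) = Complex.I • L.contLinear v) (f : SmoothFunction F) :
    cderiv (holVec v) (pullback L f) = pullback L (cderiv (holVec (L.contLinear v)) f) := by
  simp only [cderiv_pullback, holVec, Prod.map, map_neg, map_smul, hL]

theorem cderiv_antiholVec_pullback {L : E →ᴬ[ℝ] F} {v : E}
    (hL : L.contLinear (Complex.I • v) = Complex.I • L.contLinear v) (f : SmoothFunction F) :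
    cderiv (antiholVec v) (pullback L f) = pullback L (cderiv (antiholVec (L.contLinear v)) f) := by
  simp only [cderiv_pullback, antiholVec, Prod.map, map_smul, hL]

theorem cderiv_holVec_add (u v : E) (f : SmoothFunction E) :
    cderiv (holVec (u + v)) f = cderiv (holVec u) f + cderiv (holVec v) f := by
  have hadd : holVec (u + v) = holVec u + holVec v := by
    simp only [holVec, smul_add, neg_add, Prod.mk_add_mk]
  rw [hadd, cderiv_add, Derivation.add_apply]

theorem cderiv_antiholVec_add (u v : E) (f : SmoothFunction E) :
    cderiv (antiholVec (u + v)) f = cderiv (antiholVec u) f + cderiv (antiholVec v) f := by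
  have hadd : antiholVec (u + v) = antiholVec u + antiholVec v := by
    simp only [antiholVec, smul_add, Prod.mk_add_mk]
  rw [hadd, cderiv_add, Derivation.add_apply]

end ComplexTangent

variable {n : ℕ}

/-- The coordinate vector field `∂/∂z_j` on `ℂⁿ`. -/
def del (j : Fin n) : Cn n × Cn n := holVec (Pi.single j 1)

/-- The coordinate vector field `∂/∂z̄_j` on `ℂⁿ`. -/
def delbar (j : Fin n) : Cn n × Cn n := antiholVec (Pi.single j 1)

theorem I_smul_single_one (j : Fin n) :
    Complex.I • (Pi.single j 1 : Cn n) = Pi.single j Complex.I := by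
  rw [← Pi.single_smul', smul_eq_mul, mul_one]

theorem wd_eq_cderiv (j : Fin n) (f : SmoothFunction (Cn n)) : wd j f = cderiv (del j) f := by
  funext z
  simp only [wd, cderiv_apply, del, holVec, I_smul_single_one, map_neg, map_smul,
    Complex.real_smul]
  push_cast
  ring

theorem wdb_eq_cderiv (j : Fin n) (f : SmoothFunction (Cn n)) :
    wdb j f = cderiv (delbar j) f := by
  funext z
  simp only [wdb, cderiv_apply, delbar, antiholVec, I_smul_single_one, map_smul,
    Complex.real_smul]
  push_cast
  ring

/-- The coordinate function `z ↦ z_j` on `ℂⁿ`. -/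
def coord (j : Fin n) : SmoothFunction (Cn n) := ofCLM (ContinuousLinearMap.proj j)

theorem cderiv_del_coord (s j : Fin n) :
    cderiv (del s) (coord j) = algebraMap ℂ _ (if j = s then 1 else 0) := by
  rw [coord, cderiv_ofCLM]
  congr 1
  split_ifs with h
  · subst h
    simp only [del, holVec, I_smul_single_one, map_neg, map_smul, ContinuousLinearMap.proj_apply,
      Pi.single_eq_same, Complex.real_smul]
    push_cast
    linear_combination (-1 / 2 : ℂ) * Complex.I_mul_I
  · simp [del, holVec, h]

theorem cderiv_delbar_coord (s j : Fin n) : cderiv (delbar s) (coord j) = 0 := by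
  rw [coord, cderiv_ofCLM]
  refine (congrArg _ ?_).trans (map_zero _)
  by_cases h : j = s
  · subst h
    simp only [delbar, antiholVec, I_smul_single_one, map_smul, ContinuousLinearMap.proj_apply,
      Pi.single_eq_same, Complex.real_smul]
    push_cast
    linear_combination (1 / 2 : ℂ) * Complex.I_mul_I
  · simp [delbar, antiholVec, h]

theorem cderiv_del_star (s : Fin n) (f : SmoothFunction (Cn n)) :
    cderiv (del s) (star f) = star (cderiv (delbar s) f) := cderiv_holVec_star _ f

theorem cderiv_delbar_star (s : Fin n) (f : SmoothFunction (Cn n)) :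
    cderiv (delbar s) (star f) = star (cderiv (del s) f) := cderiv_antiholVec_star _ f

/-- The diagonal quadratic form `∑ c_j |z_j|²` on `ℂⁿ`, with complex coefficients. -/
def diagonalForm (c : Fin n → ℂ) : SmoothFunction (Cn n) := ∑ j, c j • (coord j * star (coord j))

theorem cderiv_del_diagonalForm (c : Fin n → ℂ) (s : Fin n) :
    cderiv (del s) (diagonalForm c) = c s • star (coord s) := by
  simp [diagonalForm, Derivation.leibniz, cderiv_del_star, cderiv_delbar_coord, cderiv_del_coord,
    apply_ite]

theorem cderiv_delbar_diagonalForm (c : Fin n → ℂ) (s : Fin n) :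
    cderiv (delbar s) (diagonalForm c) = c s • coord s := by
  simp [diagonalForm, Derivation.leibniz, cderiv_delbar_star, cderiv_delbar_coord,
    cderiv_del_coord, apply_ite]

theorem diagonalForm_apply (c : Fin n → ℂ) (z : Cn n) :
    diagonalForm c z = ∑ j, c j * (Complex.normSq (z j) : ℂ) := by
  have hcoord (j : Fin n) : coord j z = z j := rfl
  have hstar (j : Fin n) : (star (coord j) : SmoothFunction (Cn n)) z = star (z j) := rfl
  change evalAt z (∑ j, c j • (coord j * star (coord j))) = _
  simp only [map_sum, map_smul, map_mul, evalAt_apply, hcoord, hstar, smul_eq_mul,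
    Complex.star_def, Complex.mul_conj]

section Hessian

variable {f : SmoothFunction (Cn n)} {c : Fin n → ℂ}
  (hf : (fun z => f z - ∑ j, c j * (Complex.normSq (z j) : ℂ)) =o[nhds 0] fun z => ‖z‖ ^ 2)

include hf

theorem evalAt_zero_cderiv_cderiv (x y : Cn n × Cn n) :
    evalAt 0 (cderiv x (cderiv y f)) = evalAt 0 (cderiv x (cderiv y (diagonalForm c))) := by
  have hO : ⇑(f - diagonalForm c) =o[nhds 0] fun z => ‖z - 0‖ ^ 2 := by
    simp only [sub_zero]
    refine hf.congr_left fun z => ?_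
    rw [← diagonalForm_apply]
    rfl
  rw [← sub_eq_zero, ← map_sub, ← map_sub, ← map_sub]
  exact evalAt_cderiv_cderiv_eq_zero_of_isLittleO hO x y

theorem evalAt_zero_cderiv_del_delbar (s t : Fin n) :
    evalAt 0 (cderiv (del s) (cderiv (delbar t) f)) = if t = s then c t else 0 := by
  rw [evalAt_zero_cderiv_cderiv hf, cderiv_delbar_diagonalForm, Derivation.map_smul,
    cderiv_del_coord, map_smul, AlgHom.commutes]
  simp

theorem evalAt_zero_cderiv_del_del (s t : Fin n) :
    evalAt 0 (cderiv (del s) (cderiv (del t) f)) = 0 := by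
  rw [evalAt_zero_cderiv_cderiv hf, cderiv_del_diagonalForm, Derivation.map_smul,
    cderiv_del_star, cderiv_delbar_coord, star_zero, smul_zero, map_zero]

theorem evalAt_zero_cderiv_delbar_delbar (s t : Fin n) :
    evalAt 0 (cderiv (delbar s) (cderiv (delbar t) f)) = 0 := by
  rw [evalAt_zero_cderiv_cderiv hf, cderiv_delbar_diagonalForm, Derivation.map_smul,
    cderiv_delbar_coord, smul_zero, map_zero]

end Hessian

end Wirtinger

section Transport

open SmoothFunction

variable {E ι : Type*} [NormedAddCommGroup E] [NormedSpace ℝ E] [Fintype ι]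

/-- `x` is a transport direction at `p` with weights `(e, c)` when, among the terms of the Leibniz
expansion of `∑ A t * B t` at `p`, those in which exactly one factor is differentiated by `x` alone
combine to `e` times a derivative of `h` minus `c` times the same derivative of `φ`. The functional
`ℓ` stands for evaluation at `p` of the remaining derivatives. -/
def IsTransportDirection (p : E) (A B : ι → SmoothFunction E) (h φ : SmoothFunction E)
    (x : E × E) (e c : ℝ) : Prop :=
  ∀ ℓ : SmoothFunction E →ₗ[ℂ] ℂ,
    ∑ t, (evalAt p (cderiv x (A t)) * ℓ (B t) + ℓ (A t) * evalAt p (cderiv x (B t))) =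
      e * ℓ (cderiv x h) - c * ℓ (cderiv x φ)

variable {p : E} {A B : ι → SmoothFunction E} {h φ : SmoothFunction E}
  {x₁ x₂ x₃ x₄ : E × E} {e₁ e₂ e₃ e₄ c₁ c₂ c₃ c₄ : ℝ}

theorem IsTransportDirection.sum_second (hx₁ : IsTransportDirection p A B h φ x₁ e₁ c₁)
    (x y : E × E) :
    ∑ t, (evalAt p (cderiv x₁ (A t)) * evalAt p (cderiv x (cderiv y (B t))) +
        evalAt p (cderiv x (cderiv y (A t))) * evalAt p (cderiv x₁ (B t))) =
      e₁ * evalAt p (cderiv x₁ (cderiv x (cderiv y h))) -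
        c₁ * evalAt p (cderiv x₁ (cderiv x (cderiv y φ))) := by
  rw [cderiv_comm x₁ x, cderiv_comm x₁ y, cderiv_comm x₁ x, cderiv_comm x₁ y]
  exact hx₁ ((evalAt p).toLinearMap ∘ₗ (cderiv x).toLinearMap ∘ₗ (cderiv y).toLinearMap)

theorem IsTransportDirection.sum_third (hx₁ : IsTransportDirection p A B h φ x₁ e₁ c₁)
    (x y z : E × E) :
    ∑ t, (evalAt p (cderiv x₁ (A t)) * evalAt p (cderiv x (cderiv y (cderiv z (B t)))) +
        evalAt p (cderiv x (cderiv y (cderiv z (A t)))) * evalAt p (cderiv x₁ (B t))) =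
      e₁ * evalAt p (cderiv x₁ (cderiv x (cderiv y (cderiv z h)))) -
        c₁ * evalAt p (cderiv x₁ (cderiv x (cderiv y (cderiv z φ)))) := by
  rw [cderiv_comm x₁ x, cderiv_comm x₁ y, cderiv_comm x₁ z, cderiv_comm x₁ x, cderiv_comm x₁ y,
    cderiv_comm x₁ z]
  exact hx₁ ((evalAt p).toLinearMap ∘ₗ (cderiv x).toLinearMap ∘ₗ (cderiv y).toLinearMap ∘ₗ
    (cderiv z).toLinearMap)

theorem third_order_transport (hA : ∀ t, evalAt p (A t) = 0) (hB : ∀ t, evalAt p (B t) = 0)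
    (hAB : VanishesToOrder 4 p (∑ t, A t * B t))
    (hx₁ : IsTransportDirection p A B h φ x₁ e₁ c₁)
    (hx₂ : IsTransportDirection p A B h φ x₂ e₂ c₂)
    (hx₃ : IsTransportDirection p A B h φ x₃ e₃ c₃) :
    (e₁ + e₂ + e₃) * evalAt p (cderiv x₁ (cderiv x₂ (cderiv x₃ h))) =
      (c₁ + c₂ + c₃) * evalAt p (cderiv x₁ (cderiv x₂ (cderiv x₃ φ))) := by
  have leibniz := (((hAB.cderiv x₃).cderiv x₂).cderiv x₁).evalAt_eq_zero
  simp only [map_sum] at leibniz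
  rw [Finset.sum_congr rfl fun t _ => map_derivation_mul₃_of_map_eq_zero (evalAt p)
    (hA t) (hB t) (cderiv x₁) (cderiv x₂) (cderiv x₃)] at leibniz
  simp only [Finset.sum_add_distrib] at leibniz
  have first := hx₁.sum_second x₂ x₃
  have second := hx₂.sum_second x₁ x₃
  have third := hx₃.sum_second x₁ x₂
  rw [cderiv_comm x₂ x₁, cderiv_comm x₂ x₁] at second
  rw [cderiv_comm x₃ x₁, cderiv_comm x₃ x₂, cderiv_comm x₃ x₁, cderiv_comm x₃ x₂] at third
  simp only [Finset.sum_add_distrib] at first second third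
  linear_combination leibniz - first - second - third

theorem fourth_order_transport (hA : ∀ t, evalAt p (A t) = 0) (hB : ∀ t, evalAt p (B t) = 0)
    (hAB : VanishesToOrder 5 p (∑ t, A t * B t))
    (hx₁ : IsTransportDirection p A B h φ x₁ e₁ c₁)
    (hx₂ : IsTransportDirection p A B h φ x₂ e₂ c₂)
    (hx₃ : IsTransportDirection p A B h φ x₃ e₃ c₃)
    (hx₄ : IsTransportDirection p A B h φ x₄ e₄ c₄) :
    (e₁ + e₂ + e₃ + e₄) * evalAt p (cderiv x₁ (cderiv x₂ (cderiv x₃ (cderiv x₄ h)))) +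
      ∑ t,
        (evalAt p (cderiv x₁ (cderiv x₂ (A t))) * evalAt p (cderiv x₃ (cderiv x₄ (B t))) +
          evalAt p (cderiv x₃ (cderiv x₄ (A t))) * evalAt p (cderiv x₁ (cderiv x₂ (B t))) +
        (evalAt p (cderiv x₁ (cderiv x₃ (A t))) * evalAt p (cderiv x₂ (cderiv x₄ (B t))) +
          evalAt p (cderiv x₂ (cderiv x₄ (A t))) * evalAt p (cderiv x₁ (cderiv x₃ (B t)))) +
        (evalAt p (cderiv x₁ (cderiv x₄ (A t))) * evalAt p (cderiv x₂ (cderiv x₃ (B t))) +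
          evalAt p (cderiv x₂ (cderiv x₃ (A t))) * evalAt p (cderiv x₁ (cderiv x₄ (B t))))) =
      (c₁ + c₂ + c₃ + c₄) * evalAt p (cderiv x₁ (cderiv x₂ (cderiv x₃ (cderiv x₄ φ)))) := by
  have leibniz := ((((hAB.cderiv x₄).cderiv x₃).cderiv x₂).cderiv x₁).evalAt_eq_zero
  simp only [map_sum] at leibniz
  rw [Finset.sum_congr rfl fun t _ => map_derivation_mul₄_of_map_eq_zero (evalAt p)
    (hA t) (hB t) (cderiv x₁) (cderiv x₂) (cderiv x₃) (cderiv x₄)] at leibniz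
  simp only [Finset.sum_add_distrib] at leibniz ⊢
  have first := hx₁.sum_third x₂ x₃ x₄
  have second := hx₂.sum_third x₁ x₃ x₄
  have third := hx₃.sum_third x₁ x₂ x₄
  have fourth := hx₄.sum_third x₁ x₂ x₃
  rw [cderiv_comm x₂ x₁, cderiv_comm x₂ x₁] at second
  rw [cderiv_comm x₃ x₁, cderiv_comm x₃ x₂, cderiv_comm x₃ x₁, cderiv_comm x₃ x₂] at third
  rw [cderiv_comm x₄ x₁, cderiv_comm x₄ x₂, cderiv_comm x₄ x₃, cderiv_comm x₄ x₁,
    cderiv_comm x₄ x₂, cderiv_comm x₄ x₃] at fourth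
  simp only [Finset.sum_add_distrib] at first second third fourth
  linear_combination leibniz - first - second - third - fourth

end Transport

section Kernel

open SmoothFunction

variable {n : ℕ}

/-- The coordinate vector field `∂/∂z_j` on the space of pairs `(z, w)`. -/
def delz (j : Fin n) : (Cn n × Cn n) × (Cn n × Cn n) := holVec (Pi.single j 1, 0)

/-- The coordinate vector field `∂/∂z̄_j` on the space of pairs `(z, w)`. -/
def delzbar (j : Fin n) : (Cn n × Cn n) × (Cn n × Cn n) := antiholVec (Pi.single j 1, 0)

/-- The coordinate vector field `∂/∂w_j` on the space of pairs `(z, w)`. -/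
def delw (j : Fin n) : (Cn n × Cn n) × (Cn n × Cn n) := holVec (0, Pi.single j 1)

/-- The coordinate vector field `∂/∂w̄_j` on the space of pairs `(z, w)`. -/
def delwbar (j : Fin n) : (Cn n × Cn n) × (Cn n × Cn n) := antiholVec (0, Pi.single j 1)

/-- The vector field `∂/∂z_j + ∂/∂w_j`, tangent to the diagonal `z = w`. -/
def delDiag (j : Fin n) : (Cn n × Cn n) × (Cn n × Cn n) := holVec (Pi.single j 1, Pi.single j 1)

/-- The vector field `∂/∂z̄_j + ∂/∂w̄_j`, tangent to the diagonal `z = w`. -/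
def delbarDiag (j : Fin n) : (Cn n × Cn n) × (Cn n × Cn n) :=
  antiholVec (Pi.single j 1, Pi.single j 1)

theorem cderiv_delDiag (j : Fin n) (f : SmoothFunction (Cn n × Cn n)) :
    cderiv (delDiag j) f = cderiv (delz j) f + cderiv (delw j) f := by
  rw [delz, delw, ← cderiv_holVec_add, Prod.mk_add_mk, add_zero, zero_add, delDiag]

theorem cderiv_delbarDiag (j : Fin n) (f : SmoothFunction (Cn n × Cn n)) :
    cderiv (delbarDiag j) f = cderiv (delzbar j) f + cderiv (delwbar j) f := by
  rw [delzbar, delwbar, ← cderiv_antiholVec_add, Prod.mk_add_mk, add_zero, zero_add, delbarDiag]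

/-- The slice `z ↦ (z, w)`. -/
def sliceMap (w : Cn n) : Cn n →ᴬ[ℝ] Cn n × Cn n :=
  (ContinuousAffineMap.id ℝ _).prod (ContinuousAffineMap.const ℝ _ w)

/-- The diagonal `z ↦ (z, z)`. -/
def diagMap (n : ℕ) : Cn n →ᴬ[ℝ] Cn n × Cn n :=
  (ContinuousAffineMap.id ℝ _).prod (ContinuousAffineMap.id ℝ _)

/-- The projection `(z, w) ↦ z`. -/
def fstMap (n : ℕ) : Cn n × Cn n →ᴬ[ℝ] Cn n :=
  (ContinuousLinearMap.fst ℝ _ _).toContinuousAffineMap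

/-- The exchange `(z, w) ↦ (w, z)`. -/
def swapMap (n : ℕ) : Cn n × Cn n →ᴬ[ℝ] Cn n × Cn n :=
  ((ContinuousLinearMap.snd ℝ (Cn n) (Cn n)).prod
    (ContinuousLinearMap.fst ℝ _ _)).toContinuousAffineMap

theorem cderiv_del_pullback_sliceMap (w : Cn n) (j : Fin n) (f : SmoothFunction (Cn n × Cn n)) :
    cderiv (del j) (pullback (sliceMap w) f) = pullback (sliceMap w) (cderiv (delz j) f) :=
  cderiv_holVec_pullback (Prod.ext rfl (smul_zero _).symm) f

theorem cderiv_delbar_pullback_sliceMap (w : Cn n) (j : Fin n)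
    (f : SmoothFunction (Cn n × Cn n)) :
    cderiv (delbar j) (pullback (sliceMap w) f) = pullback (sliceMap w) (cderiv (delzbar j) f) :=
  cderiv_antiholVec_pullback (Prod.ext rfl (smul_zero _).symm) f

theorem cderiv_del_pullback_diagMap (j : Fin n) (f : SmoothFunction (Cn n × Cn n)) :
    cderiv (del j) (pullback (diagMap n) f) = pullback (diagMap n) (cderiv (delDiag j) f) :=
  cderiv_holVec_pullback rfl f

theorem cderiv_delbar_pullback_diagMap (j : Fin n) (f : SmoothFunction (Cn n × Cn n)) :
    cderiv (delbar j) (pullback (diagMap n) f) = pullback (diagMap n) (cderiv (delbarDiag j) f) :=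
  cderiv_antiholVec_pullback rfl f

theorem cderiv_delz_pullback_fstMap (j : Fin n) (f : SmoothFunction (Cn n)) :
    cderiv (delz j) (pullback (fstMap n) f) = pullback (fstMap n) (cderiv (del j) f) :=
  cderiv_holVec_pullback rfl f

theorem cderiv_delzbar_pullback_fstMap (j : Fin n) (f : SmoothFunction (Cn n)) :
    cderiv (delzbar j) (pullback (fstMap n) f) = pullback (fstMap n) (cderiv (delbar j) f) :=
  cderiv_antiholVec_pullback rfl f

theorem cderiv_delDiag_pullback_fstMap (j : Fin n) (f : SmoothFunction (Cn n)) :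
    cderiv (delDiag j) (pullback (fstMap n) f) = pullback (fstMap n) (cderiv (del j) f) :=
  cderiv_holVec_pullback rfl f

theorem cderiv_delbarDiag_pullback_fstMap (j : Fin n) (f : SmoothFunction (Cn n)) :
    cderiv (delbarDiag j) (pullback (fstMap n) f) = pullback (fstMap n) (cderiv (delbar j) f) :=
  cderiv_antiholVec_pullback rfl f

theorem evalAt_zero_pullback_fstMap (f : SmoothFunction (Cn n)) :
    evalAt 0 (pullback (fstMap n) f) = evalAt 0 f := rfl

/-- The Hermitian adjoint `(z, w) ↦ conj (f (w, z))` of a kernel. -/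
def kernelAdjoint (f : SmoothFunction (Cn n × Cn n)) : SmoothFunction (Cn n × Cn n) :=
  star (pullback (swapMap n) f)

theorem evalAt_zero_kernelAdjoint (f : SmoothFunction (Cn n × Cn n)) :
    evalAt 0 (kernelAdjoint f) = starRingEnd ℂ (evalAt 0 f) := rfl

theorem cderiv_delz_kernelAdjoint (j : Fin n) (f : SmoothFunction (Cn n × Cn n)) :
    cderiv (delz j) (kernelAdjoint f) = kernelAdjoint (cderiv (delwbar j) f) :=
  (cderiv_holVec_star _ _).trans (congrArg star (cderiv_antiholVec_pullback rfl f))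

theorem cderiv_delzbar_kernelAdjoint (j : Fin n) (f : SmoothFunction (Cn n × Cn n)) :
    cderiv (delzbar j) (kernelAdjoint f) = kernelAdjoint (cderiv (delw j) f) :=
  (cderiv_antiholVec_star _ _).trans (congrArg star (cderiv_holVec_pullback rfl f))

end Kernel

/-- The coefficient of `i |∂³φ/∂z̄_t∂z_j∂z_k(0)|²` in the mixed fourth derivative of a phase, where
`a = |λ_t|`, `b = |λ_j|` and `c = |λ_k|`. -/
def quarticCoeff (a b c : ℝ) : ℝ :=
  2 / (a + b + c) ^ 2 * (a + b + c - b * c / (c + a) - b * c / (b + a))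

theorem mul_one_sub_eq_mul_quarticCoeff {a b c : ℝ} (ha : 0 < a) (hb : 0 < b) (hc : 0 < c) :
    2 * (b + c) / (a + b + c) *
        (1 - ((b - a) / (a + b) + (c - a) / (a + c) - (b + c - a) / (a + b + c))) =
      (2 * b + 2 * c) * quarticCoeff a b c := by
  rw [quarticCoeff]
  field_simp
  ring

section Phase

open SmoothFunction

variable {n : ℕ}

/-- The part of the conditions on a phase `ψ` with weight `φ = ∑ λ_j |z_j|² + o(|z|²)` that
determines the mixed fourth derivatives of `ψ` at the origin: the eikonal equation is imposed only
on the 4-jet at the origin, and `ψ` is prescribed to second order only on the slice `w = 0`. -/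
structure IsLocalPhase (lam : Fin n → ℝ) (φ : SmoothFunction (Cn n))
    (ψ : SmoothFunction (Cn n × Cn n)) : Prop where
  star_weight : star φ = φ
  weight_isLittleO :
    (fun z => φ z - ∑ j, (lam j : ℂ) * (Complex.normSq (z j) : ℂ)) =o[nhds 0] fun z => ‖z‖ ^ 2
  apply_diag : ∀ z, ψ (z, z) = 0
  hermitian : ∀ z w, ψ (z, w) = -starRingEnd ℂ (ψ (w, z))
  wdb_diag : ∀ z j, wdb j (fun x => ψ (x, z)) z = Complex.I * wdb j φ z
  wd_diag : ∀ z j, wd j (fun x => ψ (x, z)) z = -Complex.I * wd j φ z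
  eikonal : ∀ m < 5, iteratedFDeriv ℝ m
    (fun p : Cn n × Cn n =>
      ∑ j, (Complex.I * wdb j (fun x => ψ (x, p.2)) p.1 + wdb j φ p.1) *
        (-Complex.I * wd j (fun x => ψ (x, p.2)) p.1 + wd j φ p.1)) 0 = 0
  slice_isLittleO :
    (fun z => ψ (z, 0) - ∑ j, Complex.I * ((|lam j| : ℝ) : ℂ) * (Complex.normSq (z j) : ℂ))
      =o[nhds 0] fun z => ‖z‖ ^ 2

theorem wd_slice (j : Fin n) (f : SmoothFunction (Cn n × Cn n)) (w : Cn n) :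
    wd j (fun x => f (x, w)) = fun z => cderiv (delz j) f (z, w) := by
  change wd j (pullback (sliceMap w) f) = _
  rw [wd_eq_cderiv, cderiv_del_pullback_sliceMap]
  rfl

theorem wdb_slice (j : Fin n) (f : SmoothFunction (Cn n × Cn n)) (w : Cn n) :
    wdb j (fun x => f (x, w)) = fun z => cderiv (delzbar j) f (z, w) := by
  change wdb j (pullback (sliceMap w) f) = _
  rw [wdb_eq_cderiv, cderiv_delbar_pullback_sliceMap]
  rfl

/-- The factor `i ∂ψ/∂z̄_t + ∂φ/∂z̄_t` of the eikonal equation. -/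
def antiholFactor (φ : SmoothFunction (Cn n)) (ψ : SmoothFunction (Cn n × Cn n)) (t : Fin n) :
    SmoothFunction (Cn n × Cn n) :=
  cderiv (delzbar t) (Complex.I • ψ + pullback (fstMap n) φ)

/-- The factor `-i ∂ψ/∂z_t + ∂φ/∂z_t` of the eikonal equation. -/
def holFactor (φ : SmoothFunction (Cn n)) (ψ : SmoothFunction (Cn n × Cn n)) (t : Fin n) :
    SmoothFunction (Cn n × Cn n) :=
  cderiv (delz t) (pullback (fstMap n) φ - Complex.I • ψ)

theorem antiholFactor_apply (φ : SmoothFunction (Cn n)) (ψ : SmoothFunction (Cn n × Cn n))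
    (t : Fin n) (p : Cn n × Cn n) :
    antiholFactor φ ψ t p = Complex.I * wdb t (fun x => ψ (x, p.2)) p.1 + wdb t φ p.1 := by
  rw [antiholFactor, map_add, Derivation.map_smul, cderiv_delzbar_pullback_fstMap, wdb_slice,
    wdb_eq_cderiv]
  rfl

theorem holFactor_apply (φ : SmoothFunction (Cn n)) (ψ : SmoothFunction (Cn n × Cn n))
    (t : Fin n) (p : Cn n × Cn n) :
    holFactor φ ψ t p = -Complex.I * wd t (fun x => ψ (x, p.2)) p.1 + wd t φ p.1 := by
  rw [holFactor, map_sub, Derivation.map_smul, cderiv_delz_pullback_fstMap, wd_slice,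
    wd_eq_cderiv, neg_mul, neg_add_eq_sub]
  rfl

/-- Transport directions at the origin for the eikonal equation of `ψ`, whose exponent is `iψ`. -/
abbrev IsEikonalDirection (φ : SmoothFunction (Cn n)) (ψ : SmoothFunction (Cn n × Cn n))
    (x : (Cn n × Cn n) × (Cn n × Cn n)) (e c : ℝ) : Prop :=
  IsTransportDirection 0 (antiholFactor φ ψ) (holFactor φ ψ) (Complex.I • ψ)
    (pullback (fstMap n) φ) x e c

namespace IsLocalPhase

variable {lam : Fin n → ℝ} {φ : SmoothFunction (Cn n)} {ψ : SmoothFunction (Cn n × Cn n)}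
  (hψ : IsLocalPhase lam φ ψ)

include hψ

theorem pullback_diagMap_eq_zero : pullback (diagMap n) ψ = 0 :=
  Subtype.ext (funext hψ.apply_diag)

theorem kernelAdjoint_eq : kernelAdjoint (Complex.I • ψ) = Complex.I • ψ := by
  ext p
  change starRingEnd ℂ (Complex.I * ψ (p.2, p.1)) = Complex.I * ψ (p.1, p.2)
  rw [hψ.hermitian p.1 p.2, map_mul, Complex.conj_I, neg_mul, mul_neg]

theorem pullback_diagMap_antiholFactor (t : Fin n) :
    pullback (diagMap n) (antiholFactor φ ψ t) = 0 := by
  ext z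
  change antiholFactor φ ψ t (z, z) = 0
  rw [antiholFactor_apply, hψ.wdb_diag, ← mul_assoc, Complex.I_mul_I]
  ring

theorem pullback_diagMap_holFactor (t : Fin n) :
    pullback (diagMap n) (holFactor φ ψ t) = 0 := by
  ext z
  change holFactor φ ψ t (z, z) = 0
  rw [holFactor_apply, hψ.wd_diag, ← mul_assoc, neg_mul_neg, Complex.I_mul_I]
  ring

theorem evalAt_zero_antiholFactor (t : Fin n) : evalAt 0 (antiholFactor φ ψ t) = 0 :=
  congrArg (evalAt 0) (hψ.pullback_diagMap_antiholFactor t)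

theorem evalAt_zero_holFactor (t : Fin n) : evalAt 0 (holFactor φ ψ t) = 0 :=
  congrArg (evalAt 0) (hψ.pullback_diagMap_holFactor t)

theorem vanishesToOrder_sum_mul :
    VanishesToOrder 5 0 (∑ t, antiholFactor φ ψ t * holFactor φ ψ t) := by
  intro m hm
  convert hψ.eikonal m hm using 2
  ext p
  change evalAt p (∑ t, antiholFactor φ ψ t * holFactor φ ψ t) = _
  simp only [map_sum, map_mul, evalAt_apply, antiholFactor_apply, holFactor_apply]

theorem slice_add_isLittleO :
    (fun z => pullback (sliceMap 0) (Complex.I • ψ + pullback (fstMap n) φ) z -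
      ∑ j, ((lam j : ℂ) - (|lam j| : ℝ)) * (Complex.normSq (z j) : ℂ)) =o[nhds 0]
        fun z => ‖z‖ ^ 2 := by
  refine ((hψ.slice_isLittleO.const_mul_left Complex.I).add hψ.weight_isLittleO).congr_left
    fun z => ?_
  change _ = Complex.I * ψ (z, 0) + φ z - _
  simp only [mul_sub, sub_mul, Finset.mul_sum, Finset.sum_sub_distrib, ← mul_assoc,
    Complex.I_mul_I, neg_mul, one_mul, Finset.sum_neg_distrib]
  ring

theorem slice_sub_isLittleO :
    (fun z => pullback (sliceMap 0) (pullback (fstMap n) φ - Complex.I • ψ) z -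
      ∑ j, ((lam j : ℂ) + (|lam j| : ℝ)) * (Complex.normSq (z j) : ℂ)) =o[nhds 0]
        fun z => ‖z‖ ^ 2 := by
  refine (hψ.weight_isLittleO.sub (hψ.slice_isLittleO.const_mul_left Complex.I)).congr_left
    fun z => ?_
  change _ = φ z - Complex.I * ψ (z, 0) - _
  simp only [mul_sub, add_mul, Finset.mul_sum, Finset.sum_add_distrib, ← mul_assoc,
    Complex.I_mul_I, neg_mul, one_mul, Finset.sum_neg_distrib]
  ring

theorem evalAt_zero_cderiv_delz_antiholFactor (s t : Fin n) :
    evalAt 0 (cderiv (delz s) (antiholFactor φ ψ t)) =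
      if t = s then (lam t : ℂ) - (|lam t| : ℝ) else 0 := by
  rw [← evalAt_zero_cderiv_del_delbar hψ.slice_add_isLittleO, cderiv_delbar_pullback_sliceMap,
    cderiv_del_pullback_sliceMap]
  rfl

theorem evalAt_zero_cderiv_delzbar_antiholFactor (s t : Fin n) :
    evalAt 0 (cderiv (delzbar s) (antiholFactor φ ψ t)) = 0 := by
  rw [← evalAt_zero_cderiv_delbar_delbar hψ.slice_add_isLittleO s t,
    cderiv_delbar_pullback_sliceMap, cderiv_delbar_pullback_sliceMap]
  rfl

theorem evalAt_zero_cderiv_delz_holFactor (s t : Fin n) :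
    evalAt 0 (cderiv (delz s) (holFactor φ ψ t)) = 0 := by
  rw [← evalAt_zero_cderiv_del_del hψ.slice_sub_isLittleO s t, cderiv_del_pullback_sliceMap,
    cderiv_del_pullback_sliceMap]
  rfl

theorem evalAt_zero_cderiv_delzbar_holFactor (s t : Fin n) :
    evalAt 0 (cderiv (delzbar s) (holFactor φ ψ t)) =
      if s = t then (lam s : ℂ) + (|lam s| : ℝ) else 0 := by
  rw [← evalAt_zero_cderiv_del_delbar hψ.slice_sub_isLittleO, cderiv_delbar_pullback_sliceMap,
    cderiv_del_pullback_sliceMap, holFactor, cderiv_comm]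
  rfl

theorem isEikonalDirection_delz (s : Fin n) :
    IsEikonalDirection φ ψ (delz s) (|lam s| - lam s) (|lam s| - lam s) := by
  intro ℓ
  simp only [hψ.evalAt_zero_cderiv_delz_antiholFactor, hψ.evalAt_zero_cderiv_delz_holFactor,
    ite_mul, zero_mul, mul_zero, add_zero, Finset.sum_ite_eq', Finset.mem_univ, if_true]
  simp only [holFactor, map_sub]
  push_cast
  ring

theorem isEikonalDirection_delzbar (s : Fin n) :
    IsEikonalDirection φ ψ (delzbar s) (|lam s| + lam s) (-(|lam s| + lam s)) := by
  intro ℓ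
  simp only [hψ.evalAt_zero_cderiv_delzbar_antiholFactor, hψ.evalAt_zero_cderiv_delzbar_holFactor,
    mul_ite, zero_mul, mul_zero, zero_add, Finset.sum_ite_eq, Finset.mem_univ, if_true]
  simp only [antiholFactor, map_add]
  push_cast
  ring

theorem isEikonalDirection_of_tangent_diag {x : (Cn n × Cn n) × (Cn n × Cn n)} {y : Cn n × Cn n}
    (hxy : ∀ f, cderiv y (pullback (diagMap n) f) = pullback (diagMap n) (cderiv x f)) :
    IsEikonalDirection φ ψ x 0 0 := by
  intro ℓ
  have eval_eq_zero {f : SmoothFunction (Cn n × Cn n)} (hf : pullback (diagMap n) f = 0) :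
      evalAt 0 (cderiv x f) = 0 := by
    change evalAt 0 (pullback (diagMap n) (cderiv x f)) = 0
    rw [← hxy, hf, map_zero, map_zero]
  simp only [eval_eq_zero (hψ.pullback_diagMap_antiholFactor _),
    eval_eq_zero (hψ.pullback_diagMap_holFactor _), zero_mul, mul_zero, add_zero,
    Finset.sum_const_zero, sub_zero, Complex.ofReal_zero]

theorem isEikonalDirection_delDiag (s : Fin n) :
    IsEikonalDirection φ ψ (delDiag s) 0 0 :=
  hψ.isEikonalDirection_of_tangent_diag (cderiv_del_pullback_diagMap s)

theorem isEikonalDirection_delbarDiag (s : Fin n) :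
    IsEikonalDirection φ ψ (delbarDiag s) 0 0 :=
  hψ.isEikonalDirection_of_tangent_diag (cderiv_delbar_pullback_diagMap s)

theorem isEikonalDirection_delz_of_neg {j : Fin n} (hj : lam j < 0) :
    IsEikonalDirection φ ψ (delz j) (2 * |lam j|) (2 * |lam j|) := by
  have hweight : 2 * |lam j| = |lam j| - lam j := by rw [abs_of_neg hj]; ring
  exact hweight ▸ hψ.isEikonalDirection_delz j

theorem isEikonalDirection_delzbar_of_neg {j : Fin n} (hj : lam j < 0) :
    IsEikonalDirection φ ψ (delzbar j) 0 0 := by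
  simpa only [abs_of_neg hj, neg_add_cancel, neg_zero] using hψ.isEikonalDirection_delzbar j

theorem isEikonalDirection_delzbar_of_pos {t : Fin n} (ht : 0 < lam t) :
    IsEikonalDirection φ ψ (delzbar t) (2 * |lam t|) (-(2 * |lam t|)) := by
  have hweight : 2 * |lam t| = |lam t| + lam t := by rw [abs_of_pos ht]; ring
  exact hweight ▸ hψ.isEikonalDirection_delzbar t

theorem third_derivative_eq {x₁ x₂ x₃ : (Cn n × Cn n) × (Cn n × Cn n)}
    {e₁ e₂ e₃ c₁ c₂ c₃ r : ℝ} (hx₁ : IsEikonalDirection φ ψ x₁ e₁ c₁)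
    (hx₂ : IsEikonalDirection φ ψ x₂ e₂ c₂) (hx₃ : IsEikonalDirection φ ψ x₃ e₃ c₃)
    (hne : e₁ + e₂ + e₃ ≠ 0) (hr : c₁ + c₂ + c₃ = r * (e₁ + e₂ + e₃)) :
    evalAt 0 (cderiv x₁ (cderiv x₂ (cderiv x₃ (Complex.I • ψ)))) =
      r * evalAt 0 (cderiv x₁ (cderiv x₂ (cderiv x₃ (pullback (fstMap n) φ)))) := by
  have hne' : (e₁ : ℂ) + e₂ + e₃ ≠ 0 := by exact_mod_cast hne
  have hr' : (c₁ : ℂ) + c₂ + c₃ = r * (e₁ + e₂ + e₃) := by exact_mod_cast hr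
  refine mul_left_cancel₀ hne' ?_
  rw [third_order_transport hψ.evalAt_zero_antiholFactor hψ.evalAt_zero_holFactor
    (fun m hm => hψ.vanishesToOrder_sum_mul m (by lia)) hx₁ hx₂ hx₃, hr']
  ring

theorem evalAt_zero_cderiv_cderiv_holFactor_eq_zero {x y : (Cn n × Cn n) × (Cn n × Cn n)}
    {e₁ e₂ : ℝ} (hx : IsEikonalDirection φ ψ x e₁ e₁) (hy : IsEikonalDirection φ ψ y e₂ e₂)
    {t : Fin n} (hne : e₁ + e₂ + (|lam t| - lam t) ≠ 0) :
    evalAt 0 (cderiv x (cderiv y (holFactor φ ψ t))) = 0 := by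
  rw [holFactor, map_sub, map_sub, map_sub, map_sub,
    hψ.third_derivative_eq hx hy (hψ.isEikonalDirection_delz t) hne (one_mul _).symm]
  simp

theorem evalAt_zero_cderiv_delz_delz_antiholFactor {t j k : Fin n} (ht : 0 < lam t)
    (hj : lam j < 0) (hk : lam k < 0) :
    evalAt 0 (cderiv (delz j) (cderiv (delz k) (antiholFactor φ ψ t))) =
      (2 * (|lam j| + |lam k|) / (|lam t| + |lam j| + |lam k|) : ℝ) *
        evalAt 0 (cderiv (delbar t) (cderiv (del j) (cderiv (del k) φ))) := by
  have exponent_derivative := hψ.third_derivative_eq (hψ.isEikonalDirection_delzbar_of_pos ht)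
    (hψ.isEikonalDirection_delz_of_neg hj) (hψ.isEikonalDirection_delz_of_neg hk) (by positivity)
    (r := (|lam j| + |lam k| - |lam t|) / (|lam t| + |lam j| + |lam k|)) (by field_simp; ring)
  rw [antiholFactor, cderiv_comm (delz k), cderiv_comm (delz j), map_add, map_add, map_add,
    map_add, exponent_derivative, cderiv_delz_pullback_fstMap, cderiv_delz_pullback_fstMap,
    cderiv_delzbar_pullback_fstMap, evalAt_zero_pullback_fstMap, ← add_one_mul]
  congr 1
  norm_cast
  field_simp
  ring

/-- The product `(∂̄_t + ∂_{w̄_t}) (∂_j + ∂_{w_j}) (∂_k + ∂_{w_k})` of fields tangent to the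
diagonal kills `ψ`, and all the other terms of its expansion are determined by the transport
equations. -/
theorem evalAt_zero_cderiv_delwbar_delw_delw {t j k : Fin n} (ht : 0 < lam t)
    (hj : lam j < 0) (hk : lam k < 0) :
    evalAt 0 (cderiv (delwbar t) (cderiv (delw j) (cderiv (delw k) (Complex.I • ψ)))) =
      ((|lam j| - |lam t|) / (|lam t| + |lam j|) + (|lam k| - |lam t|) / (|lam t| + |lam k|) -
          (|lam j| + |lam k| - |lam t|) / (|lam t| + |lam j| + |lam k|) : ℝ) *
        evalAt 0 (cderiv (delbar t) (cderiv (del j) (cderiv (del k) φ))) := by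
  have hj₀ := hj.ne
  have hk₀ := hk.ne
  have hz_t := hψ.isEikonalDirection_delzbar_of_pos ht
  have hz_j := hψ.isEikonalDirection_delz_of_neg hj
  have hz_k := hψ.isEikonalDirection_delz_of_neg hk
  have hd_t := hψ.isEikonalDirection_delbarDiag t
  have hd_j := hψ.isEikonalDirection_delDiag j
  have hd_k := hψ.isEikonalDirection_delDiag k
  have zzz := hψ.third_derivative_eq hz_t hz_j hz_k (by positivity)
    (r := (|lam j| + |lam k| - |lam t|) / (|lam t| + |lam j| + |lam k|)) (by field_simp; ring)
  have zzd := hψ.third_derivative_eq hz_t hz_j hd_k (by positivity)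
    (r := (|lam j| - |lam t|) / (|lam t| + |lam j|)) (by field_simp; ring)
  have zdz := hψ.third_derivative_eq hz_t hd_j hz_k (by positivity)
    (r := (|lam k| - |lam t|) / (|lam t| + |lam k|)) (by field_simp; ring)
  have zdd := hψ.third_derivative_eq hz_t hd_j hd_k (r := -1) (by positivity) (by ring)
  have dzz := hψ.third_derivative_eq hd_t hz_j hz_k (r := 1) (by positivity) (by ring)
  have dzd := hψ.third_derivative_eq hd_t hz_j hd_k (r := 1) (by positivity) (by ring)
  have ddz := hψ.third_derivative_eq hd_t hd_j hz_k (r := 1) (by positivity) (by ring)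
  have ddd : evalAt 0 (cderiv (delbarDiag t) (cderiv (delDiag j) (cderiv (delDiag k)
      (Complex.I • ψ)))) = 0 := by
    change evalAt 0 (pullback (diagMap n) (cderiv (delbarDiag t) _)) = 0
    rw [← cderiv_delbar_pullback_diagMap, ← cderiv_del_pullback_diagMap,
      ← cderiv_del_pullback_diagMap, map_smul, hψ.pullback_diagMap_eq_zero, smul_zero, map_zero,
      map_zero, map_zero, map_zero]
  simp only [cderiv_delz_pullback_fstMap, cderiv_delzbar_pullback_fstMap,
    cderiv_delDiag_pullback_fstMap, cderiv_delbarDiag_pullback_fstMap,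
    evalAt_zero_pullback_fstMap] at zzz zzd zdz zdd dzz dzd ddz
  simp only [cderiv_delDiag, cderiv_delbarDiag, map_add] at zzd zdz zdd dzz dzd ddz ddd
  push_cast at zzz zzd zdz zdd dzz dzd ddz ⊢
  linear_combination ddd - ddz - dzd + dzz - zdd + zdz + zzd - zzz

theorem evalAt_zero_cderiv_delzbar_delzbar_holFactor {t j k : Fin n} (ht : 0 < lam t)
    (hj : lam j < 0) (hk : lam k < 0) :
    evalAt 0 (cderiv (delzbar j) (cderiv (delzbar k) (holFactor φ ψ t))) =
      (1 - ((|lam j| - |lam t|) / (|lam t| + |lam j|) + (|lam k| - |lam t|) / (|lam t| + |lam k|) -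
          (|lam j| + |lam k| - |lam t|) / (|lam t| + |lam j| + |lam k|)) : ℝ) *
        starRingEnd ℂ (evalAt 0 (cderiv (delbar t) (cderiv (del j) (cderiv (del k) φ)))) := by
  have weight_derivative :
      evalAt 0 (cderiv (delbar j) (cderiv (delbar k) (cderiv (del t) φ))) =
        starRingEnd ℂ (evalAt 0 (cderiv (delbar t) (cderiv (del j) (cderiv (del k) φ)))) := by
    rw [cderiv_comm (delbar t), cderiv_comm (delbar t), ← evalAt_star, ← cderiv_delbar_star,
      ← cderiv_delbar_star, ← cderiv_del_star, hψ.star_weight]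
  have exponent_derivative :
      evalAt 0 (cderiv (delzbar j) (cderiv (delzbar k) (cderiv (delz t) (Complex.I • ψ)))) =
        starRingEnd ℂ
          (evalAt 0 (cderiv (delwbar t) (cderiv (delw j) (cderiv (delw k) (Complex.I • ψ))))) := by
    rw [cderiv_comm (delwbar t), cderiv_comm (delwbar t), ← evalAt_zero_kernelAdjoint,
      ← cderiv_delzbar_kernelAdjoint, ← cderiv_delzbar_kernelAdjoint, ← cderiv_delz_kernelAdjoint,
      hψ.kernelAdjoint_eq]
  rw [holFactor, map_sub, map_sub, map_sub, map_sub, exponent_derivative,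
    hψ.evalAt_zero_cderiv_delwbar_delw_delw ht hj hk, cderiv_delz_pullback_fstMap,
    cderiv_delzbar_pullback_fstMap, cderiv_delzbar_pullback_fstMap, evalAt_zero_pullback_fstMap,
    weight_derivative, map_mul, Complex.conj_ofReal, ← one_sub_mul]
  norm_cast

theorem second_derivative_products_eq {t j k : Fin n} (hlam : lam t ≠ 0) (hj : lam j < 0)
    (hk : lam k < 0) :
    evalAt 0 (cderiv (delzbar j) (cderiv (delz j) (antiholFactor φ ψ t))) *
          evalAt 0 (cderiv (delzbar k) (cderiv (delz k) (holFactor φ ψ t))) +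
        evalAt 0 (cderiv (delzbar k) (cderiv (delz k) (antiholFactor φ ψ t))) *
          evalAt 0 (cderiv (delzbar j) (cderiv (delz j) (holFactor φ ψ t))) +
      (evalAt 0 (cderiv (delzbar j) (cderiv (delzbar k) (antiholFactor φ ψ t))) *
          evalAt 0 (cderiv (delz j) (cderiv (delz k) (holFactor φ ψ t))) +
        evalAt 0 (cderiv (delz j) (cderiv (delz k) (antiholFactor φ ψ t))) *
          evalAt 0 (cderiv (delzbar j) (cderiv (delzbar k) (holFactor φ ψ t)))) +
      (evalAt 0 (cderiv (delzbar j) (cderiv (delz k) (antiholFactor φ ψ t))) *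
          evalAt 0 (cderiv (delz j) (cderiv (delzbar k) (holFactor φ ψ t))) +
        evalAt 0 (cderiv (delz j) (cderiv (delzbar k) (antiholFactor φ ψ t))) *
          evalAt 0 (cderiv (delzbar j) (cderiv (delz k) (holFactor φ ψ t)))) =
    if 0 < lam t then
      ((2 * |lam j| + 2 * |lam k|) * quarticCoeff |lam t| |lam j| |lam k| : ℝ) *
        (Complex.normSq
          (evalAt 0 (cderiv (delbar t) (cderiv (del j) (cderiv (del k) φ)))) : ℂ)
    else 0 := by
  have hz_j := hψ.isEikonalDirection_delz_of_neg hj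
  have hz_k := hψ.isEikonalDirection_delz_of_neg hk
  have hzbar_j := hψ.isEikonalDirection_delzbar_of_neg hj
  have hzbar_k := hψ.isEikonalDirection_delzbar_of_neg hk
  have hj₀ := abs_pos_of_neg hj
  have hk₀ := abs_pos_of_neg hk
  have ht := le_abs_self (lam t)
  rw [hψ.evalAt_zero_cderiv_cderiv_holFactor_eq_zero hzbar_k hz_k (by linarith),
    hψ.evalAt_zero_cderiv_cderiv_holFactor_eq_zero hzbar_j hz_j (by linarith),
    hψ.evalAt_zero_cderiv_cderiv_holFactor_eq_zero hz_j hz_k (by linarith),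
    hψ.evalAt_zero_cderiv_cderiv_holFactor_eq_zero hz_j hzbar_k (by linarith),
    hψ.evalAt_zero_cderiv_cderiv_holFactor_eq_zero hzbar_j hz_k (by linarith)]
  simp only [mul_zero, zero_add, add_zero]
  split_ifs with hpos
  · rw [hψ.evalAt_zero_cderiv_delz_delz_antiholFactor hpos hj hk,
      hψ.evalAt_zero_cderiv_delzbar_delzbar_holFactor hpos hj hk, mul_mul_mul_comm,
      Complex.mul_conj, ← Complex.ofReal_mul,
      mul_one_sub_eq_mul_quarticCoeff (abs_pos.2 hlam) hj₀ hk₀]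
  · have hneg : lam t < 0 := lt_of_le_of_ne (not_lt.1 hpos) hlam
    rw [hψ.evalAt_zero_cderiv_cderiv_holFactor_eq_zero hzbar_j hzbar_k, mul_zero]
    rw [abs_of_neg hneg]
    linarith

theorem fourth_derivative_eq (hlam : ∀ t, lam t ≠ 0) {j k : Fin n} (hj : lam j < 0)
    (hk : lam k < 0) :
    evalAt 0 (cderiv (delzbar j) (cderiv (delz j) (cderiv (delzbar k) (cderiv (delz k)
        (Complex.I • ψ))))) =
      evalAt 0 (cderiv (delbar j) (cderiv (del j) (cderiv (delbar k) (cderiv (del k) φ)))) -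
        ∑ t, if 0 < lam t then
          (quarticCoeff |lam t| |lam j| |lam k| : ℂ) *
            (Complex.normSq
              (evalAt 0 (cderiv (delbar t) (cderiv (del j) (cderiv (del k) φ)))) : ℂ)
        else 0 := by
  have hne : (2 * |lam j| + 2 * |lam k| : ℝ) ≠ 0 := by
    have := abs_pos_of_neg hj
    positivity
  have transport := fourth_order_transport hψ.evalAt_zero_antiholFactor
    hψ.evalAt_zero_holFactor hψ.vanishesToOrder_sum_mul
    (hψ.isEikonalDirection_delzbar_of_neg hj) (hψ.isEikonalDirection_delz_of_neg hj)
    (hψ.isEikonalDirection_delzbar_of_neg hk) (hψ.isEikonalDirection_delz_of_neg hk)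
  simp only [hψ.second_derivative_products_eq (hlam _) hj hk, cderiv_delz_pullback_fstMap,
    cderiv_delzbar_pullback_fstMap, evalAt_zero_pullback_fstMap, Complex.ofReal_mul, mul_assoc,
    ← mul_ite_zero, ← Finset.mul_sum] at transport
  simp only [← mul_ite_zero]
  refine mul_left_cancel₀ (Complex.ofReal_ne_zero.2 hne) ?_
  push_cast at transport ⊢
  linear_combination transport

end IsLocalPhase

section Admissible

variable {lam : Fin n → ℝ} {φ : Cn n → ℝ} {ψ : Cn n → Cn n → ℂ}

theorem PhiOK.contDiff_cplx (hφ : PhiOK lam φ) : ContDiff ℝ (⊤ : ℕ∞) (cplx φ) :=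
  Complex.ofRealCLM.contDiff.comp hφ.1

theorem PhiOK.isLittleO (hφ : PhiOK lam φ) :
    (fun z => cplx φ z - ∑ j, (lam j : ℂ) * (Complex.normSq (z j) : ℂ)) =o[nhds 0]
      fun z => ‖z‖ ^ 2 := by
  refine isLittleO_norm_pow_of_isBigO
    ((Complex.isBigO_ofReal_left.2 hφ.2).congr_left fun z => ?_)
  simp only [cplx]
  push_cast
  rfl

theorem Admissible.slice_isLittleO (hψ : Admissible lam φ ψ) :
    (fun z => ψ z 0 - ∑ j, Complex.I * ((|lam j| : ℝ) : ℂ) * (Complex.normSq (z j) : ℂ))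
      =o[nhds 0] fun z => ‖z‖ ^ 2 := by
  obtain ⟨-, -, -, -, -, -, -, -, -, quadratic⟩ := hψ
  have hslice : Filter.Tendsto (fun z : Cn n => (z, (0 : Cn n))) (nhds 0) (nhds 0) :=
    Continuous.tendsto' (by fun_prop) _ _ rfl
  refine isLittleO_norm_pow_of_isBigO
    (((quadratic.comp_tendsto hslice).congr_left fun z => ?_).congr_right fun z => ?_)
  · simp [Finset.mul_sum, mul_assoc]
  · simp [Prod.norm_def]

theorem isLocalPhase_of_admissible (hφ : PhiOK lam φ) (hψ : Admissible lam φ ψ) :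
    IsLocalPhase lam ⟨cplx φ, hφ.contDiff_cplx⟩ ⟨fun p => ψ p.1 p.2, hψ.1⟩ := by
  have slice_isLittleO := hψ.slice_isLittleO
  obtain ⟨-, apply_diag, hermitian, -, wdb_diag, wd_diag, -, -, eikonal, -⟩ := hψ
  exact
    { star_weight := Subtype.ext (funext fun z => Complex.conj_ofReal (φ z))
      weight_isLittleO := hφ.isLittleO
      apply_diag
      hermitian
      wdb_diag
      wd_diag
      eikonal := fun m _ => eikonal m 0
      slice_isLittleO }

end Admissible

theorem statement9_general {lam : Fin n → ℝ} (hlam : ∀ t, lam t ≠ 0)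
    {φ : SmoothFunction (Cn n)} {ψ : SmoothFunction (Cn n × Cn n)} (hψ : IsLocalPhase lam φ ψ)
    {j k : Fin n} (hj : lam j < 0) (hk : lam k < 0) :
    wdb j (wd j (wdb k (wd k (fun z => ψ (z, 0))))) 0 =
      (∑ t, if 0 < lam t then
        (quarticCoeff |lam t| |lam j| |lam k| : ℂ) * Complex.I *
          (Complex.normSq (wdb t (wd j (wd k φ)) 0) : ℂ)
      else 0) - Complex.I * wdb j (wd j (wdb k (wd k φ))) 0 := by
  have key := hψ.fourth_derivative_eq hlam hj hk
  simp only [Derivation.map_smul, map_smul, smul_eq_mul, evalAt_apply, ← mul_ite_zero] at key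
  simp only [wd_slice, wdb_slice, wd_eq_cderiv, wdb_eq_cderiv, Prod.mk_zero_zero]
  simp only [mul_assoc, mul_left_comm _ Complex.I, ← mul_ite_zero, ← Finset.mul_sum]
  linear_combination -Complex.I * key + cderiv (delzbar j) (cderiv (delz j)
    (cderiv (delzbar k) (cderiv (delz k) ψ))) 0 * Complex.I_mul_I

end Phase

/-- the mixed fourth derivative `∂⁴ψ/∂z̄_j∂z_j∂z̄_k∂z_k(0,0)`
(derivatives in the `z`-variables, `w` held fixed at `0`) for `1 ≤ j,k ≤ q`. -/
theorem statement9 (n q : ℕ) (hn : 1 ≤ n) (hq : q ≤ n) (lam : Fin n → ℝ)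
    (hneg : ∀ j : Fin n, (j : ℕ) < q → lam j < 0)
    (hpos : ∀ j : Fin n, q ≤ (j : ℕ) → 0 < lam j)
    (φ : Cn n → ℝ) (hφ : PhiOK lam φ)
    (ψ : Cn n → Cn n → ℂ) (hψ : Admissible lam φ ψ)
    (j k : Fin n) (hj : (j : ℕ) < q) (hk : (k : ℕ) < q) :
    wdb j (wd j (wdb k (wd k (fun z => ψ z 0)))) 0 =
      (∑ t : Fin n, if q ≤ (t : ℕ) then
        ((2 / (|lam t| + |lam j| + |lam k|) ^ 2 *
            (|lam t| + |lam j| + |lam k|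
              - |lam j| * |lam k| / (|lam k| + |lam t|)
              - |lam j| * |lam k| / (|lam j| + |lam t|)) : ℝ) : ℂ) * Complex.I *
          (Complex.normSq (wdb t (wd j (wd k (cplx φ))) 0) : ℂ)
      else 0)
      - Complex.I * wdb j (wd j (wdb k (wd k (cplx φ)))) 0 := by
  have lam_ne_zero (t : Fin n) : lam t ≠ 0 :=
    (lt_or_ge (t : ℕ) q).elim (fun h => (hneg t h).ne) fun h => (hpos t h).ne'
  have le_iff_pos (t : Fin n) : q ≤ (t : ℕ) ↔ 0 < lam t :=
    ⟨hpos t, fun ht => not_lt.1 fun h => (hneg t h).not_gt ht⟩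
  simp only [le_iff_pos]
  exact statement9_general lam_ne_zero (isLocalPhase_of_admissible hφ hψ) (hneg j hj) (hneg k hk)
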